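/- Let p ≥ 2 and let ξ, η ∈ ℝ^k with |ξ| > 1. Then ⟨H_{p−1}(η) − H_{p−1}(ξ), η − ξ⟩ ≥ (min{1, p−1} / 2^{p+1}) · (|ξ|−1)^p / ( |ξ| (|ξ| + |η|) ) · |η − ξ|². -/

import Mathlib

open scoped RealInnerProductSpace

/-- `Hmap lam ξ = (|ξ| − 1)₊^lam • ξ/|ξ|` for `ξ ≠ 0`, and `Hmap lam 0 = 0`. -/
noncomputable def Hmap {k : ℕ} (lam : ℝ) (ξ : EuclideanSpace ℝ (Fin k)) :
    EuclideanSpace ℝ (Fin k) :=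
  open Classical in
  if ξ = (0 : EuclideanSpace ℝ (Fin k)) then 0
  else (max (‖ξ‖ - 1) 0) ^ lam • ‖ξ‖⁻¹ • ξ

lemma Hmap_eq_smul {k : ℕ} (lam : ℝ) (ξ : EuclideanSpace ℝ (Fin k)) :
    Hmap lam ξ = ((max (‖ξ‖ - 1) 0) ^ lam * ‖ξ‖⁻¹) • ξ := by
  unfold Hmap
  split_ifs with h
  · simp [h]
  · rw [smul_smul]

lemma Hmap_scalar_aux (p : ℝ) (hp : 2 ≤ p) (a b : ℝ) (ha : 1 < a) (hb : 0 ≤ b) :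
    (a - 1) ^ (p - 1) * (a - 1) / (2 * (a * (a + b))) * (b - a) ^ 2 ≤
      ((max (b - 1) 0) ^ (p - 1) - (a - 1) ^ (p - 1)) * (b - a) := by
  have hx : 0 < a - 1 := by linarith
  have key : ∀ t : ℝ, 0 ≤ t → t ^ (p - 1) = t ^ (p - 2) * t := by
    intro t ht
    have : p - 1 = (p - 2) + 1 := by ring
    rw [this, Real.rpow_add_of_nonneg ht (by linarith) (by norm_num), Real.rpow_one]
  have hpos : 0 < 2 * (a * (a + b)) := by positivity
  have hA : 0 < (a - 1) ^ (p - 1) := Real.rpow_pos_of_pos hx _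
  rcases le_total 1 b with h1 | h1
  · rw [max_eq_left (by linarith)]
    have hE : 0 < (a - 1) ^ (p - 2) := Real.rpow_pos_of_pos hx _
    have h2 : (a - 1) ^ (p - 1) * (a - 1) / (2 * (a * (a + b))) ≤ (a - 1) ^ (p - 2) := by
      rw [key _ hx.le, div_le_iff₀ hpos, mul_assoc]
      apply mul_le_mul_of_nonneg_left _ hE.le
      nlinarith
    refine (mul_le_mul_of_nonneg_right h2 (sq_nonneg _)).trans ?_
    rw [key _ hx.le, key (b - 1) (by linarith)]
    have h3 : 0 ≤ ((b - 1) ^ (p - 2) - (a - 1) ^ (p - 2)) * (b - a) := by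
      rcases le_total a b with h | h
      · have := Real.rpow_le_rpow hx.le (by linarith : a - 1 ≤ b - 1) (by linarith : 0 ≤ p - 2)
        exact mul_nonneg (by linarith) (by linarith)
      · have := Real.rpow_le_rpow (by linarith) (by linarith : b - 1 ≤ a - 1)
          (by linarith : 0 ≤ p - 2)
        exact mul_nonneg_of_nonpos_of_nonpos (by linarith) (by linarith)
    nlinarith [mul_nonneg h3 (by linarith : 0 ≤ b - 1)]
  · rw [max_eq_right (by linarith), Real.zero_rpow (by linarith)]
    have hab : 0 < a * (a + b) := by positivity
    have h4 : (a - 1) * (a - b) ≤ 2 * (a * (a + b)) := by nlinarith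
    rw [div_mul_eq_mul_div, div_le_iff₀ hpos]
    have := mul_le_mul_of_nonneg_left h4 (mul_nonneg hA.le (by linarith : 0 ≤ a - b))
    nlinarith

theorem Hmap_monotonicity_quantitative {k : ℕ} (p : ℝ) (hp : 2 ≤ p)
    (ξ η : EuclideanSpace ℝ (Fin k)) (hξ : 1 < ‖ξ‖) :
    ⟪Hmap (p - 1) η - Hmap (p - 1) ξ, η - ξ⟫ ≥
      min 1 (p - 1) / 2 ^ (p + 1) *
        ((‖ξ‖ - 1) ^ p / (‖ξ‖ * (‖ξ‖ + ‖η‖))) * ‖η - ξ‖ ^ 2 := by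
  have hs := real_inner_le_norm η ξ
  have hb := norm_nonneg η
  have haux := Hmap_scalar_aux p hp ‖ξ‖ ‖η‖ hξ hb
  have hx : 0 < ‖ξ‖ - 1 := by linarith
  have hB : (max (‖η‖ - 1) 0) ^ (p - 1) * ‖η‖⁻¹ * ‖η‖ = (max (‖η‖ - 1) 0) ^ (p - 1) := by
    rcases eq_or_ne ‖η‖ 0 with h | h
    · rw [h, max_eq_right (by norm_num), Real.zero_rpow (by linarith)]; simp
    · field_simp
  have hpow : (‖ξ‖ - 1) ^ p = (‖ξ‖ - 1) ^ (p - 1) * (‖ξ‖ - 1) := by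
    conv_lhs => rw [show p = (p - 1) + 1 by ring]
    rw [Real.rpow_add hx, Real.rpow_one]
  have htwo : (2 : ℝ) ≤ 2 ^ (p + 1) := by
    simpa using Real.rpow_le_rpow_of_exponent_le (by norm_num : (1 : ℝ) ≤ 2)
      (by linarith : (1 : ℝ) ≤ p + 1)
  have hA : 0 < (‖ξ‖ - 1) ^ (p - 1) := Real.rpow_pos_of_pos hx _
  have hnorm : ‖η - ξ‖ ^ 2 = (‖η‖ - ‖ξ‖) ^ 2 + 2 * (‖η‖ * ‖ξ‖ - ⟪η, ξ⟫) := by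
    rw [norm_sub_sq_real]; ring
  have hBn : 0 ≤ (max (‖η‖ - 1) 0) ^ (p - 1) * ‖η‖⁻¹ := by positivity
  rw [Hmap_eq_smul, Hmap_eq_smul, max_eq_left hx.le, hpow, min_eq_left (by linarith)]
  generalize (max (‖η‖ - 1) 0) ^ (p - 1) = B at *
  generalize (‖ξ‖ - 1) ^ (p - 1) = A at *
  have hC : 1 / 2 ^ (p + 1) * (A * (‖ξ‖ - 1) / (‖ξ‖ * (‖ξ‖ + ‖η‖))) ≤
      A * (‖ξ‖ - 1) / (2 * (‖ξ‖ * (‖ξ‖ + ‖η‖))) := by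
    have h1 : 1 / (2 : ℝ) ^ (p + 1) ≤ 1 / 2 := one_div_le_one_div_of_le (by norm_num) htwo
    have h0 : 0 ≤ A * (‖ξ‖ - 1) / (‖ξ‖ * (‖ξ‖ + ‖η‖)) := by positivity
    refine (mul_le_mul_of_nonneg_right h1 h0).trans (le_of_eq ?_)
    rw [div_mul_div_comm, one_mul]
  refine ge_iff_le.mpr ((mul_le_mul_of_nonneg_right hC (sq_nonneg _)).trans ?_)
  have hD : 2 * (A * (‖ξ‖ - 1) / (2 * (‖ξ‖ * (‖ξ‖ + ‖η‖)))) ≤ A * ‖ξ‖⁻¹ := by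
    have ha : 0 < ‖ξ‖ := by linarith
    have : 2 * (A * (‖ξ‖ - 1) / (2 * (‖ξ‖ * (‖ξ‖ + ‖η‖)))) =
        A * ‖ξ‖⁻¹ * ((‖ξ‖ - 1) / (‖ξ‖ + ‖η‖)) := by
      field_simp
    rw [this]
    apply mul_le_of_le_one_right (by positivity)
    rw [div_le_one (by positivity)]
    linarith
  have hAa : A * ‖ξ‖⁻¹ * ‖ξ‖ = A := by
    have : ‖ξ‖ ≠ 0 := by linarith
    field_simp
  have hinner : ⟪(B * ‖η‖⁻¹) • η - (A * ‖ξ‖⁻¹) • ξ, η - ξ⟫ =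
      (B - A) * (‖η‖ - ‖ξ‖) + (B * ‖η‖⁻¹ + A * ‖ξ‖⁻¹) * (‖η‖ * ‖ξ‖ - ⟪η, ξ⟫) := by
    rw [inner_sub_left, inner_sub_right, inner_sub_right, real_inner_smul_left,
      real_inner_smul_left, real_inner_smul_left, real_inner_smul_left,
      real_inner_self_eq_norm_sq, real_inner_self_eq_norm_sq, real_inner_comm η ξ]
    linear_combination (‖η‖ - ‖ξ‖) * hB - (‖η‖ - ‖ξ‖) * hAa
  rw [hinner, hnorm]
  have h5 := mul_le_mul_of_nonneg_right (hD.trans (le_add_of_nonneg_left hBn))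
    (sub_nonneg.mpr hs)
  linarith
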